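/- Let P be a pregroup and let R be a set of cyclically P-reduced words over X. Then the normal closure of V_P ∪ R in F(X^σ) is equal to the normal closure of V_P ∪ I(R) in F(X^σ), where I(R) = ⋃_{R'∈R} I(R'). Consequently, the presentations ⟨X | {xx^σ : x ∈ X} ∪ V_P ∪ R⟩ and ⟨X | {xx^σ : x ∈ X} ∪ V_P ∪ I(R)⟩ define the same group. -/

import Mathlib

/-! A map `f : X → G` into a group that kills the words `x x^σ` and the words of `V_P`, extended by
`1 ↦ 1` to `f' : P → G`, satisfies `f' [xy] = f' x * f' y` whenever `(x, y) ∈ D(P)`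
(`Pregroup.extend_mul`). If `w` is a cyclic interleave of `v` with witnesses `s_i`, then the product
of the `f' w_i = (f' s_i)⁻¹ * f' v_i * f' s_{i+1}` telescopes, so the value of `w` in `G` is the
conjugate by `f' s_0` of the value of `v` (`Pregroup.prod_take_interleave`). Hence words of `I(R)`
become trivial in every such group in which `R` is trivial, in particular in the quotient by the
normal closure of the relators. Conversely `R ⊆ I(R)`, by taking all `s_i = 1`.

`Pregroup.normalClosure_union_interleave` carries this out over an arbitrary ambient group; it gives
the equality in `F(X^σ)`, and, applied to the free group on `X`, the equality of the two kernels and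
hence the isomorphism of the presented groups. -/

/-- A pregroup in the sense of Stallings: a set `P` with a distinguished element `one`,
a partial multiplication, defined for pairs in `D` and modelled here as a total
function `mul` whose values are only meaningful on pairs in `D`, and an involution
`inv` (written `x ↦ x^σ` in the literature), satisfying Stallings' axioms (P1)–(P5). -/
structure Pregroup (P : Type*) where
  one : P
  D : P → P → Prop
  mul : P → P → P
  inv : P → P
  /-- `σ` is an involution. -/
  inv_inv : ∀ x, inv (inv x) = x
  /-- (P1) -/
  D_one_left : ∀ x, D one x
  D_one_right : ∀ x, D x one
  one_mul : ∀ x, mul one x = x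
  mul_one : ∀ x, mul x one = x
  /-- (P2) -/
  D_mul_inv : ∀ x, D x (inv x)
  D_inv_mul : ∀ x, D (inv x) x
  mul_inv : ∀ x, mul x (inv x) = one
  inv_mul : ∀ x, mul (inv x) x = one
  /-- (P3) -/
  D_inv : ∀ x y, D x y → D (inv y) (inv x)
  inv_mul_eq : ∀ x y, D x y → inv (mul x y) = mul (inv y) (inv x)
  /-- (P4) -/
  D_assoc : ∀ x y z, D x y → D y z → (D (mul x y) z ↔ D x (mul y z))
  mul_assoc : ∀ x y z, D x y → D y z → D (mul x y) z → mul (mul x y) z = mul x (mul y z)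
  /-- (P5) -/
  five : ∀ x y z t, D x y → D y z → D z t → D (mul x y) z ∨ D (mul y z) t

namespace Pregroup

variable {P : Type*}

/-- The `i`-th letter (0-based) of the word `w` over `P`. -/
def letter (pg : Pregroup P) (w : List P) (i : ℕ) : P :=
  w.getD i pg.one

/-- `w` is a word over `X = P \ {1}`. -/
def InX (pg : Pregroup P) (w : List P) : Prop :=
  ∀ p ∈ w, p ≠ pg.one

/-- `w` is `P`-reduced: no pair of consecutive letters lies in `D(P)`. -/
def PReduced (pg : Pregroup P) (w : List P) : Prop :=
  ∀ i, i + 1 < w.length → ¬ pg.D (pg.letter w i) (pg.letter w (i + 1))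

/-- `w` is cyclically `P`-reduced. -/
def CycPReduced (pg : Pregroup P) (w : List P) : Prop :=
  pg.PReduced w ∧ (1 < w.length → ¬ pg.D (pg.letter w (w.length - 1)) (pg.letter w 0))

end Pregroup

namespace Pregroup

variable {P : Type*}

/-- `w` is a cyclic interleave of `v` (the relation `v ≈ᶜ w`): either both words have
length at most 1 and are equal, or they have the same length `n > 1` and there exist
`s 0, s 1, …, s (n-1), s n = s 0` in `P` such that
`(s i^σ, v i), (v i, s (i+1)), ([s i ^σ * v i], s (i+1)) ∈ D(P)` and
`w i = [s i ^σ * v i * s (i+1)]` for all `i < n`. -/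
def CycInterleave (pg : Pregroup P) (v w : List P) : Prop :=
  w.length = v.length ∧
  ((v.length ≤ 1 ∧ w = v) ∨
    (1 < v.length ∧
      ∃ s : ℕ → P, s v.length = s 0 ∧
        ∀ i < v.length,
          pg.D (pg.inv (s i)) (pg.letter v i) ∧
          pg.D (pg.letter v i) (s (i + 1)) ∧
          pg.D (pg.mul (pg.inv (s i)) (pg.letter v i)) (s (i + 1)) ∧
          pg.letter w i = pg.mul (pg.mul (pg.inv (s i)) (pg.letter v i)) (s (i + 1))))

end Pregroup

namespace Pregroup

variable {P : Type*}

/-- The words `x x^σ` (`x ∈ X = P \ {1}`), as words over `X`. -/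
def invWords (pg : Pregroup P) : Set (List {x : P // x ≠ pg.one}) :=
  {w | ∃ x y : {x : P // x ≠ pg.one}, (y : P) = pg.inv (x : P) ∧ w = [x, y]}

/-- The set `V_P` of length-three words `x y [xy]^σ` with `(x, y) ∈ D(P)`, `x ≠ y^σ`. -/
def vpWords (pg : Pregroup P) : Set (List {x : P // x ≠ pg.one}) :=
  {w | ∃ x y z : {x : P // x ≠ pg.one}, pg.D (x : P) (y : P) ∧ (x : P) ≠ pg.inv (y : P) ∧
      (z : P) = pg.inv (pg.mul (x : P) (y : P)) ∧ w = [x, y, z]}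

/-- Interpret a word over `X` as an element of the free group on `X`. -/
def wordToFree (pg : Pregroup P) (w : List {x : P // x ≠ pg.one}) :
    FreeGroup {x : P // x ≠ pg.one} :=
  (w.map FreeGroup.of).prod

/-- The group `F(X^σ) = ⟨X ∣ x x^σ (x ∈ X)⟩`. -/
abbrev FXsigmaGroup (pg : Pregroup P) : Type _ :=
  PresentedGroup (pg.wordToFree '' pg.invWords)

/-- Interpret a word over `X` as an element of `F(X^σ)`. -/
def wordToFX (pg : Pregroup P) (w : List {x : P // x ≠ pg.one}) : pg.FXsigmaGroup :=
  (w.map fun x => (PresentedGroup.of x : pg.FXsigmaGroup)).prod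

/-- The universal group `U(P) = ⟨X ∣ {x x^σ : x ∈ X} ∪ V_P⟩` of a pregroup. -/
abbrev UniversalGroup (pg : Pregroup P) : Type _ :=
  PresentedGroup (pg.wordToFree '' (pg.invWords ∪ pg.vpWords))

/-- Interpret a word over `X` as an element of `U(P)`. -/
def wordToU (pg : Pregroup P) (w : List {x : P // x ≠ pg.one}) : pg.UniversalGroup :=
  (w.map fun x => (PresentedGroup.of x : pg.UniversalGroup)).prod

end Pregroup

namespace Pregroup

/-- The set `I(R) = ⋃_{R' ∈ R} I(R')` of all cyclic interleaves of elements of `R`. -/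
def interleaveClasses {P : Type*} (pg : Pregroup P)
    (R : Set (List {x : P // x ≠ pg.one})) : Set (List {x : P // x ≠ pg.one}) :=
  {w | ∃ v ∈ R, pg.CycInterleave (v.map Subtype.val) (w.map Subtype.val)}

end Pregroup

namespace Pregroup

variable {P : Type*} (pg : Pregroup P)

theorem inv_one : pg.inv pg.one = pg.one := by
  rw [← pg.one_mul (pg.inv pg.one), pg.mul_inv]

theorem inv_ne_one {x : P} (hx : x ≠ pg.one) : pg.inv x ≠ pg.one := by
  intro h
  apply hx
  rw [← pg.inv_inv x, h, pg.inv_one]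

theorem eq_inv_of_mul_eq_one {x y : P} (hD : pg.D x y) (h : pg.mul x y = pg.one) :
    x = pg.inv y := by
  have hD' : pg.D (pg.mul x y) (pg.inv y) := by
    rw [h]
    exact pg.D_one_left _
  have := pg.mul_assoc x y (pg.inv y) hD (pg.D_mul_inv y) hD'
  rw [h, pg.one_mul, pg.mul_inv, pg.mul_one] at this
  exact this.symm

/-- Cyclic interleaving is reflexive: take every `s_i` to be `1`. -/
theorem cycInterleave_refl (v : List P) : pg.CycInterleave v v := by
  refine ⟨rfl, ?_⟩
  rcases Nat.lt_or_ge 1 v.length with h | h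
  · refine Or.inr ⟨h, fun _ => pg.one, rfl, fun i _ => ?_⟩
    simp only [pg.inv_one, pg.one_mul, pg.mul_one]
    exact ⟨pg.D_one_left _, pg.D_one_right _, pg.D_one_right _, trivial⟩
  · exact Or.inl ⟨h, rfl⟩

section Extend

variable {G : Type*} [Group G] (f : {x : P // x ≠ pg.one} → G)

open Classical in
/-- The extension to `P` of a map `f : X → G`, sending the distinguished element to `1`. -/
noncomputable def extend (x : P) : G :=
  if h : x = pg.one then 1 else f ⟨x, h⟩

theorem extend_one : pg.extend f pg.one = 1 := by
  simp [extend]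

theorem extend_of_ne {x : P} (h : x ≠ pg.one) : pg.extend f x = f ⟨x, h⟩ := by
  simp [extend, h]

theorem map_extend (w : List {x : P // x ≠ pg.one}) :
    (w.map Subtype.val).map (pg.extend f) = w.map f := by
  rw [List.map_map]
  exact List.map_congr_left fun x _ => pg.extend_of_ne f x.2

variable {f}

theorem extend_inv (hinv : ∀ w ∈ pg.invWords, (w.map f).prod = 1) (x : P) :
    pg.extend f (pg.inv x) = (pg.extend f x)⁻¹ := by
  by_cases hx : x = pg.one
  · rw [hx, pg.inv_one, pg.extend_one, _root_.inv_one]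
  · have h := hinv [⟨x, hx⟩, ⟨pg.inv x, pg.inv_ne_one hx⟩] ⟨_, _, rfl, rfl⟩
    rw [pg.extend_of_ne f hx, pg.extend_of_ne f (pg.inv_ne_one hx)]
    exact eq_inv_of_mul_eq_one_right (by simpa using h)

/-- The extension respects the partial multiplication as soon as `f` kills the words `x x^σ`
and `V_P`. -/
theorem extend_mul (hinv : ∀ w ∈ pg.invWords, (w.map f).prod = 1)
    (hvp : ∀ w ∈ pg.vpWords, (w.map f).prod = 1) {x y : P} (hD : pg.D x y) :
    pg.extend f (pg.mul x y) = pg.extend f x * pg.extend f y := by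
  by_cases hx : x = pg.one
  · rw [hx, pg.one_mul, pg.extend_one, _root_.one_mul]
  by_cases hy : y = pg.one
  · rw [hy, pg.mul_one, pg.extend_one, _root_.mul_one]
  by_cases hxy : x = pg.inv y
  · rw [hxy, pg.inv_mul, pg.extend_one, pg.extend_inv hinv, inv_mul_cancel]
  have hm : pg.mul x y ≠ pg.one := fun h => hxy (pg.eq_inv_of_mul_eq_one hD h)
  have h := hvp [⟨x, hx⟩, ⟨y, hy⟩, ⟨pg.inv (pg.mul x y), pg.inv_ne_one hm⟩]
    ⟨_, _, _, hD, hxy, rfl, rfl⟩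
  simp only [List.map_cons, List.map_nil, List.prod_cons, List.prod_nil, _root_.mul_one,
    ← pg.extend_of_ne f, pg.extend_inv hinv, ← _root_.mul_assoc] at h
  exact (mul_inv_eq_one.mp h).symm

/-- Telescoping: prefixes of an interleave of `v` agree with those of `v` up to the factors
coming from the first and the last of the interleaving elements. -/
theorem prod_take_interleave (hinv : ∀ w ∈ pg.invWords, (w.map f).prod = 1)
    (hvp : ∀ w ∈ pg.vpWords, (w.map f).prod = 1) {v w : List P} (hl : w.length = v.length)
    (s : ℕ → P)
    (hs : ∀ i < v.length,
      pg.D (pg.inv (s i)) (pg.letter v i) ∧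
      pg.D (pg.letter v i) (s (i + 1)) ∧
      pg.D (pg.mul (pg.inv (s i)) (pg.letter v i)) (s (i + 1)) ∧
      pg.letter w i = pg.mul (pg.mul (pg.inv (s i)) (pg.letter v i)) (s (i + 1)))
    (k : ℕ) (hk : k ≤ v.length) :
    ((w.map (pg.extend f)).take k).prod =
      (pg.extend f (s 0))⁻¹ * ((v.map (pg.extend f)).take k).prod * pg.extend f (s k) := by
  induction k with
  | zero => simp
  | succ k ih =>
    have hkv : k < v.length := hk
    have hkw : k < w.length := hl ▸ hkv
    obtain ⟨h1, -, h3, h4⟩ := hs k hkv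
    have hv : pg.letter v k = v[k] := by simp [letter, hkv]
    have hw : pg.letter w k = w[k] := by simp [letter, hkw]
    rw [List.prod_take_succ _ k (by simpa using hkw), List.prod_take_succ _ k (by simpa using hkv),
      ih hkv.le, List.getElem_map, List.getElem_map, ← hw, ← hv, h4,
      pg.extend_mul hinv hvp h3, pg.extend_mul hinv hvp h1, pg.extend_inv hinv]
    group

theorem prod_eq_one_of_cycInterleave (hinv : ∀ w ∈ pg.invWords, (w.map f).prod = 1)
    (hvp : ∀ w ∈ pg.vpWords, (w.map f).prod = 1) {v w : List {x : P // x ≠ pg.one}}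
    (h : pg.CycInterleave (v.map Subtype.val) (w.map Subtype.val))
    (hv : (v.map f).prod = 1) : (w.map f).prod = 1 := by
  obtain ⟨hl, ⟨-, h⟩ | ⟨-, s, hs0, hs⟩⟩ := h
  · rw [← pg.map_extend f, h, pg.map_extend f, hv]
  · have key := pg.prod_take_interleave hinv hvp hl s hs _ le_rfl
    rw [List.take_of_length_le (by simp at hl ⊢; exact hl.le), List.take_of_length_le (by simp),
      pg.map_extend f, pg.map_extend f, hs0, hv] at key
    simpa using key

end Extend

/-- In a group `G` with a map `X → G`, adjoining to a set of relators `T ⊇ V_P` whose normal closure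
contains the words `x x^σ` either `R` or `I(R)` yields the same normal closure. -/
theorem normalClosure_union_interleave {G : Type*} [Group G] (f : {x : P // x ≠ pg.one} → G)
    (T R : Set (List {x : P // x ≠ pg.one})) (hT : pg.vpWords ⊆ T)
    (hinv : ∀ w ∈ pg.invWords,
      (w.map f).prod ∈ Subgroup.normalClosure ((fun w => (w.map f).prod) '' T)) :
    Subgroup.normalClosure ((fun w => (w.map f).prod) '' (T ∪ R)) =
      Subgroup.normalClosure ((fun w => (w.map f).prod) '' (T ∪ pg.interleaveClasses R)) := by
  apply le_antisymm
  · refine Subgroup.normalClosure_mono (Set.image_mono (Set.union_subset_union_right T ?_))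
    exact fun v hv => ⟨v, hv, pg.cycInterleave_refl _⟩
  · refine Subgroup.normalClosure_le_normal ?_
    set N := Subgroup.normalClosure ((fun w => (w.map f).prod) '' (T ∪ R)) with hN
    have hq : ∀ w : List {x : P // x ≠ pg.one},
        (w.map fun x => (f x : G ⧸ N)).prod = 1 ↔ (w.map f).prod ∈ N := by
      intro w
      rw [← QuotientGroup.eq_one_iff, ← QuotientGroup.mk'_apply, map_list_prod, List.map_map]
      rfl
    have hmem : ∀ w ∈ T ∪ R, (w.map f).prod ∈ N := fun w hw =>
      Subgroup.subset_normalClosure ⟨w, hw, rfl⟩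
    rintro _ ⟨w, hw | ⟨v, hv, hvw⟩, rfl⟩
    · exact hmem w (Or.inl hw)
    · refine (hq w).1 (pg.prod_eq_one_of_cycInterleave (fun u hu => (hq u).2 ?_)
        (fun u hu => (hq u).2 (hmem u (Or.inl (hT hu)))) hvw ((hq v).2 (hmem v (Or.inr hv))))
      exact Subgroup.normalClosure_mono (Set.image_mono Set.subset_union_left) (hinv u hu)

end Pregroup

/-- Let `P` be a pregroup and let `R` be a set of cyclically
`P`-reduced words over `X`.  Then the normal closure of `V_P ∪ R` in `F(X^σ)` equals
the normal closure of `V_P ∪ I(R)` in `F(X^σ)`; consequently, the presentations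
`⟨X ∣ {x x^σ} ∪ V_P ∪ R⟩` and `⟨X ∣ {x x^σ} ∪ V_P ∪ I(R)⟩` define the same group. -/
theorem Pregroup.normalClosure_interleaveClasses {P : Type*} (pg : Pregroup P)
    (R : Set (List {x : P // x ≠ pg.one}))
    (hR : ∀ w ∈ R, pg.CycPReduced (w.map Subtype.val)) :
    Subgroup.normalClosure (pg.wordToFX '' (pg.vpWords ∪ R)) =
      Subgroup.normalClosure (pg.wordToFX '' (pg.vpWords ∪ pg.interleaveClasses R)) ∧
    Nonempty
      (PresentedGroup (pg.wordToFree '' (pg.invWords ∪ pg.vpWords ∪ R)) ≃*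
        PresentedGroup
          (pg.wordToFree '' (pg.invWords ∪ pg.vpWords ∪ pg.interleaveClasses R))) := by
  constructor
  · refine pg.normalClosure_union_interleave PresentedGroup.of pg.vpWords R subset_rfl
      fun w hw => ?_
    have h : (w.map fun x => (PresentedGroup.of x : pg.FXsigmaGroup)).prod = 1 := by
      have h1 : PresentedGroup.mk (pg.wordToFree '' pg.invWords) (pg.wordToFree w) = 1 :=
        PresentedGroup.one_of_mem ⟨w, hw, rfl⟩
      rw [wordToFree, map_list_prod, List.map_map] at h1
      exact h1
    rw [h]
    exact Subgroup.one_mem _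
  · exact ⟨QuotientGroup.quotientMulEquivOfEq
      (pg.normalClosure_union_interleave FreeGroup.of (pg.invWords ∪ pg.vpWords) R
        Set.subset_union_right
        fun w hw => Subgroup.subset_normalClosure ⟨w, Or.inl hw, rfl⟩)⟩
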